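/- arXiv:1605.03266 — 2 statements merged into one kernel-verified Lean document; each statement's English description precedes it below -/
import Mathlib

section
/- Let n be a natural number and let s be the outmap of a unique sink orientation (USO) of the n-dimensional hypercube. Then there exists exactly one vertex w ⊆ Fin n with s(w) = Finset.univ (the unique global source of the cube). -/
/-- An outmap `s` is the outmap of an orientation of the `n`-cube if for every
vertex `v` and every direction `lam`, the `lam`-edge at `v` is outgoing at `v`
iff it is incoming at the neighbor `v Δ {lam}`. -/
def IsOrientation (n : ℕ) (s : Finset (Fin n) → Finset (Fin n)) : Prop :=
  ∀ (v : Finset (Fin n)) (lam : Fin n), lam ∈ s v ↔ lam ∉ s (symmDiff v {lam})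

/-- An outmap `s` is a unique sink orientation (USO) of the `n`-cube if it is
the outmap of an orientation and every subcube `[u : w]` has a unique sink. -/
def IsUSO (n : ℕ) (s : Finset (Fin n) → Finset (Fin n)) : Prop :=
  IsOrientation n s ∧
    ∀ u w : Finset (Fin n), u ⊆ w →
      ∃! x : Finset (Fin n), u ⊆ x ∧ x ⊆ w ∧ s x ∩ (w \ u) = ∅

/-!
Reversing all edges in one direction `i` preserves the unique sink property: if a subcube spans
`i`, its sink is the sink of one of its two facets orthogonal to `i`, and after the reversal it is
the sink of the other facet instead. Reversing the directions of a finite set `A` one at a time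
turns the vertices with outmap `A` into sinks, so there is exactly one of them in each subcube
spanning `A`; the global source is the case where `A` consists of all directions.
-/

open scoped symmDiff

section UniqueSinks

variable {α : Type*} [DecidableEq α] {s : Finset α → Finset α} {u w x A : Finset α} {i : α}

/-- `x` is a sink of the subcube `[u : w]`, whose vertices are the sets between `u` and `w` and
whose directions are the elements of `w \ u`. -/
def IsSubcubeSink (s : Finset α → Finset α) (u w x : Finset α) : Prop :=
  u ⊆ x ∧ x ⊆ w ∧ s x ∩ (w \ u) = ∅

/-- The unique sink property of an outmap on the finite subsets of an arbitrary type: every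
subcube has exactly one sink. -/
def HasUniqueSinks (s : Finset α → Finset α) : Prop :=
  ∀ u w : Finset α, u ⊆ w → ∃! x, IsSubcubeSink s u w x

/-- The outmap obtained from `s` by reversing all edges whose direction lies in `A`. -/
def reverseDirections (s : Finset α → Finset α) (A : Finset α) : Finset α → Finset α :=
  fun x ↦ s x ∆ A

lemma mem_reverseDirections_singleton_self : i ∈ reverseDirections s {i} x ↔ i ∉ s x := by
  simp [reverseDirections, Finset.mem_symmDiff]

lemma reverseDirections_empty : reverseDirections s ∅ = s := by
  funext x
  exact symmDiff_bot (s x)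

lemma reverseDirections_insert (hi : i ∉ A) :
    reverseDirections s (insert i A) = reverseDirections (reverseDirections s A) {i} := by
  have insert_eq_symmDiff : insert i A = A ∆ {i} := by
    rw [(Finset.disjoint_singleton_right.mpr hi).symmDiff_eq_sup, Finset.sup_eq_union,
      Finset.union_comm, Finset.insert_eq]
  funext x
  simp only [reverseDirections, insert_eq_symmDiff, symmDiff_assoc]

lemma isSubcubeSink_reverseDirections_iff (hA : A ⊆ w \ u) :
    IsSubcubeSink (reverseDirections s A) u w x ↔ u ⊆ x ∧ x ⊆ w ∧ s x ∩ (w \ u) = A := by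
  have inter_symmDiff : (s x ∆ A) ∩ (w \ u) = (s x ∩ (w \ u)) ∆ A := by
    rw [← Finset.inf_eq_inter, inf_symmDiff_distrib_right, inf_eq_left.mpr hA, Finset.inf_eq_inter]
  rw [IsSubcubeSink, reverseDirections, inter_symmDiff, ← Finset.bot_eq_empty, symmDiff_eq_bot]

lemma isSubcubeSink_reverseDirections_iff_of_disjoint (hA : Disjoint A (w \ u)) :
    IsSubcubeSink (reverseDirections s A) u w x ↔ IsSubcubeSink s u w x := by
  have inter_symmDiff : (s x ∆ A) ∩ (w \ u) = s x ∩ (w \ u) := by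
    rw [← Finset.inf_eq_inter, inf_symmDiff_distrib_right, hA.eq_bot, symmDiff_bot,
      Finset.inf_eq_inter]
  rw [IsSubcubeSink, reverseDirections, inter_symmDiff, IsSubcubeSink]

lemma isSubcubeSink_iff_facets (hi : i ∈ w \ u) :
    IsSubcubeSink s u w x ↔
      i ∉ s x ∧ (IsSubcubeSink s u (w.erase i) x ∨ IsSubcubeSink s (insert i u) w x) := by
  have outmap_condition : s x ∩ (w \ u) = ∅ ↔ i ∉ s x ∧ s x ∩ (w \ u).erase i = ∅ := by
    rw [← Finset.insert_erase hi, ← Finset.disjoint_iff_inter_eq_empty,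
      Finset.disjoint_insert_right, Finset.disjoint_iff_inter_eq_empty,
      Finset.erase_insert (Finset.notMem_erase i _)]
  simp only [IsSubcubeSink, outmap_condition, Finset.erase_sdiff_comm, Finset.sdiff_insert,
    Finset.subset_erase, Finset.insert_subset_iff]
  tauto

lemma isSubcubeSink_reverseDirections_singleton_iff_facets (hi : i ∈ w \ u) :
    IsSubcubeSink (reverseDirections s {i}) u w x ↔
      i ∈ s x ∧ (IsSubcubeSink s u (w.erase i) x ∨ IsSubcubeSink s (insert i u) w x) := by
  rw [isSubcubeSink_iff_facets hi, mem_reverseDirections_singleton_self, not_not,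
    isSubcubeSink_reverseDirections_iff_of_disjoint (by simp),
    isSubcubeSink_reverseDirections_iff_of_disjoint (by simp)]

lemma existsUnique_pair_of_existsUnique_not {β : Type*} {p : β → Prop} {a b : β} (hab : a ≠ b)
    (h : ∃! x, ¬p x ∧ (x = a ∨ x = b)) : ∃! x, p x ∧ (x = a ∨ x = b) := by
  obtain ⟨c, ⟨hc, rfl | rfl⟩, hunique⟩ := h
  · have hb : p b := by_contra fun hb ↦ hab (hunique b ⟨hb, .inr rfl⟩).symm
    exact ⟨b, ⟨hb, .inr rfl⟩, by grind⟩
  · have ha : p a := by_contra fun ha ↦ hab (hunique a ⟨ha, .inl rfl⟩)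
    exact ⟨a, ⟨ha, .inl rfl⟩, by grind⟩

namespace HasUniqueSinks

lemma reverseDirections_singleton (hs : HasUniqueSinks s) (i : α) :
    HasUniqueSinks (reverseDirections s {i}) := by
  intro u w huw
  by_cases hi : i ∈ w \ u
  · obtain ⟨hiw, hiu⟩ := Finset.mem_sdiff.mp hi
    obtain ⟨a, ha, ha_unique⟩ := hs u (w.erase i) (Finset.subset_erase.mpr ⟨huw, hiu⟩)
    obtain ⟨b, hb, hb_unique⟩ := hs (insert i u) w (Finset.insert_subset hiw huw)
    have hab : a ≠ b := by
      rintro rfl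
      exact Finset.notMem_erase i w (ha.2.1 (hb.1 (Finset.mem_insert_self i u)))
    have facet_sink_iff (x : Finset α) :
        IsSubcubeSink s u (w.erase i) x ∨ IsSubcubeSink s (insert i u) w x ↔ x = a ∨ x = b :=
      or_congr ⟨ha_unique x, fun h ↦ h ▸ ha⟩ ⟨hb_unique x, fun h ↦ h ▸ hb⟩
    have sink_before := hs u w huw
    simp only [isSubcubeSink_iff_facets hi, facet_sink_iff] at sink_before
    simp only [isSubcubeSink_reverseDirections_singleton_iff_facets hi, facet_sink_iff]
    exact existsUnique_pair_of_existsUnique_not hab sink_before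
  · simpa only [isSubcubeSink_reverseDirections_iff_of_disjoint
      (Finset.disjoint_singleton_left.mpr hi)] using hs u w huw

lemma reverseDirections (hs : HasUniqueSinks s) (A : Finset α) :
    HasUniqueSinks (reverseDirections s A) := by
  induction A using Finset.induction_on with
  | empty => rwa [reverseDirections_empty]
  | insert i A hi ih =>
    rw [reverseDirections_insert hi]
    exact ih.reverseDirections_singleton i

end HasUniqueSinks

theorem uso_unique_global_source_general (hs : HasUniqueSinks s) (huw : u ⊆ w) (hA : A ⊆ w \ u) :
    ∃! x, u ⊆ x ∧ x ⊆ w ∧ s x ∩ (w \ u) = A := by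
  simpa only [isSubcubeSink_reverseDirections_iff hA] using hs.reverseDirections A u w huw

end UniqueSinks

/-- A USO of a cube has a unique global source: exactly one vertex whose outmap
is all of the directions. -/
theorem uso_unique_global_source (n : ℕ)
    (s : Finset (Fin n) → Finset (Fin n)) (hs : IsUSO n s) :
    ∃! w : Finset (Fin n), s w = Finset.univ := by
  simpa using uso_unique_global_source_general (s := s) (A := Finset.univ) hs.2
    (Finset.empty_subset Finset.univ) (by simp)
end

section
/- For every n ≥ 1, the recursively defined outmap s_n has period P(s_n) = 2^n; that is, s_n^[2^n](∅) = ∅ and s_n^[l](∅) ≠ ∅ for all l with 1 ≤ l < 2^n. In particular there exist unique sink orientations of the n-cube whose outmap has period exponential in n. -/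
/-- The recursion step from dimension n to dimension n+1: on the lower facet
(vertices not containing Fin.last n) use the outmap s together with the
outgoing new direction Fin.last n; on the upper facet (vertices containing
Fin.last n) all edges point downward, so the outmap is v \ {Fin.last n}. -/
noncomputable def stepOutmap (n : ℕ) (s : Finset (Fin n) → Finset (Fin n)) :
    Finset (Fin (n + 1)) → Finset (Fin (n + 1)) := fun v =>
  if Fin.last n ∈ v then v \ {Fin.last n}
  else
    (s (v.preimage Fin.castSucc (Fin.castSucc_injective n).injOn)).image Fin.castSucc ∪
      {Fin.last n}

/-- The recursively defined family of outmaps s_n: for n = 1 the single edge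
points from ∅ to {0}; s_{n+1} is obtained from s_n by the recursion step.
(The value at n = 0 is irrelevant.) -/
noncomputable def recOutmap : (n : ℕ) → Finset (Fin n) → Finset (Fin n)
  | 0 => fun _ => ∅
  | 1 => fun v => if (0 : Fin 1) ∈ v then ∅ else {0}
  | (n + 2) => stepOutmap (n + 1) (recOutmap (n + 1))

/-- The period of an outmap s: the least l ≥ 1 with s^[l](∅) = ∅. -/
noncomputable def outmapPeriod (n : ℕ) (s : Finset (Fin n) → Finset (Fin n)) : ℕ :=
  sInf {l : ℕ | 1 ≤ l ∧ s^[l] ∅ = ∅}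

/-!
Two steps of `stepOutmap n s` act on the lower facet as one step of `s`, while each single step
switches between the two facets. So every return time to a vertex is even, and the period of a lower
vertex is twice its period under `s`. Since `recOutmap 1` also arises from `recOutmap 0` by the
recursion step, the period of `∅` doubles with each dimension, starting from `1` on the `0`-cube.
-/

open Function

theorem minimalPeriod_eq_of_semiconj {α β : Type*} {f : α → β} {ga : α → α} {gb : β → β}
    (h : Semiconj f ga gb) (hf : Injective f) (x : α) :
    minimalPeriod gb (f x) = minimalPeriod ga x := by
  refine minimalPeriod_eq_minimalPeriod_iff.2 fun l => ?_
  rw [IsPeriodicPt, IsFixedPt, ← (h.iterate_right l).eq x, hf.eq_iff]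
  rfl

theorem minimalPeriod_eq_mul_minimalPeriod_iterate {α : Type*} {f : α → α} {x : α} {k : ℕ}
    (hk : k ≠ 0) (h : k ∣ minimalPeriod f x) :
    minimalPeriod f x = k * minimalPeriod f^[k] x := by
  rw [minimalPeriod_iterate_eq_div_gcd hk, Nat.gcd_eq_right h, Nat.mul_div_cancel' h]

theorem outmapPeriod_eq_minimalPeriod (n : ℕ) (s : Finset (Fin n) → Finset (Fin n)) :
    outmapPeriod n s = minimalPeriod s ∅ :=
  minimalPeriod_eq_sInf_n_pos_IsPeriodicPt.symm

section StepOutmap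

variable {n : ℕ} (s : Finset (Fin n) → Finset (Fin n))

theorem last_notMem_image_castSucc (v : Finset (Fin n)) :
    Fin.last n ∉ v.image Fin.castSucc := by
  simp [Fin.castSucc_ne_last]

theorem stepOutmap_of_last_mem {v : Finset (Fin (n + 1))} (hv : Fin.last n ∈ v) :
    stepOutmap n s v = v \ {Fin.last n} :=
  if_pos hv

theorem stepOutmap_image_castSucc (v : Finset (Fin n)) :
    stepOutmap n s (v.image Fin.castSucc) = (s v).image Fin.castSucc ∪ {Fin.last n} := by
  have preimage_image : (v.image Fin.castSucc).preimage Fin.castSucc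
      (Fin.castSucc_injective n).injOn = v := by
    ext; simp
  rw [stepOutmap, if_neg (last_notMem_image_castSucc v), preimage_image]

theorem semiconj_image_castSucc_stepOutmap_iterate_two :
    Semiconj (Finset.image Fin.castSucc) s (stepOutmap n s)^[2] := by
  intro v
  have last_mem : Fin.last n ∈ (s v).image Fin.castSucc ∪ {Fin.last n} := by simp
  symm
  calc (stepOutmap n s)^[2] (v.image Fin.castSucc)
      = stepOutmap n s ((s v).image Fin.castSucc ∪ {Fin.last n}) := by
        rw [← stepOutmap_image_castSucc]; rfl
    _ = (s v).image Fin.castSucc \ {Fin.last n} := by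
        rw [stepOutmap_of_last_mem s last_mem, Finset.union_sdiff_right]
    _ = (s v).image Fin.castSucc :=
        sdiff_eq_left.2 (Finset.disjoint_singleton_right.2 (last_notMem_image_castSucc (s v)))

theorem last_mem_stepOutmap_iff (v : Finset (Fin (n + 1))) :
    Fin.last n ∈ stepOutmap n s v ↔ Fin.last n ∉ v := by
  unfold stepOutmap
  split_ifs with hv <;> simp [hv]

theorem last_mem_iterate_stepOutmap_iff (l : ℕ) (v : Finset (Fin (n + 1))) :
    Fin.last n ∈ (stepOutmap n s)^[l] v ↔ (Fin.last n ∈ v ↔ Even l) := by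
  induction l with
  | zero => simp
  | succ l ih =>
    rw [iterate_succ_apply', last_mem_stepOutmap_iff, ih, Nat.even_add_one]
    tauto

theorem even_of_isPeriodicPt_stepOutmap {l : ℕ} {v : Finset (Fin (n + 1))}
    (h : IsPeriodicPt (stepOutmap n s) l v) : Even l := by
  have last_mem_iff := last_mem_iterate_stepOutmap_iff s l v
  rw [h.eq] at last_mem_iff
  tauto

theorem minimalPeriod_stepOutmap (v : Finset (Fin n)) :
    minimalPeriod (stepOutmap n s) (v.image Fin.castSucc) = 2 * minimalPeriod s v := by
  have two_dvd : 2 ∣ minimalPeriod (stepOutmap n s) (v.image Fin.castSucc) :=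
    (even_of_isPeriodicPt_stepOutmap s (isPeriodicPt_minimalPeriod _ _)).two_dvd
  rw [minimalPeriod_eq_mul_minimalPeriod_iterate two_ne_zero two_dvd,
    minimalPeriod_eq_of_semiconj (semiconj_image_castSucc_stepOutmap_iterate_two s)
      (Finset.image_injective (Fin.castSucc_injective n))]

end StepOutmap

theorem recOutmap_succ (n : ℕ) : recOutmap (n + 1) = stepOutmap n (recOutmap n) := by
  cases n with
  | zero =>
    funext v
    by_cases hv : (0 : Fin 1) ∈ v
    · have v_eq : v = {0} :=
        Finset.eq_singleton_iff_unique_mem.2 ⟨hv, fun i _ => Fin.fin_one_eq_zero i⟩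
      simp [recOutmap, stepOutmap, v_eq]
    · simp [recOutmap, stepOutmap, hv]
  | succ n => rfl

theorem minimalPeriod_recOutmap_empty (n : ℕ) : minimalPeriod (recOutmap n) ∅ = 2 ^ n := by
  induction n with
  | zero => exact minimalPeriod_eq_one_of_subsingleton
  | succ n ih =>
    rw [recOutmap_succ, pow_succ', ← ih, ← minimalPeriod_stepOutmap, Finset.image_empty]

/-- For every n ≥ 1 the recursively defined outmap s_n has period exactly 2^n:
s_n^[2^n](∅) = ∅ while s_n^[l](∅) ≠ ∅ for all 1 ≤ l < 2^n.  In particular there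
are USOs of the n-cube whose outmap has period exponential in n. -/
theorem recOutmap_period_exponential (n : ℕ) (hn : 1 ≤ n) :
    outmapPeriod n (recOutmap n) = 2 ^ n ∧
    (recOutmap n)^[2 ^ n] ∅ = ∅ ∧
    ∀ l : ℕ, 1 ≤ l → l < 2 ^ n → (recOutmap n)^[l] ∅ ≠ ∅ := by
  have period_eq := minimalPeriod_recOutmap_empty n
  refine ⟨(outmapPeriod_eq_minimalPeriod n _).trans period_eq, ?_, fun l hl hlt => ?_⟩
  · rw [← period_eq]
    exact iterate_minimalPeriod
  · exact not_isPeriodicPt_of_pos_of_lt_minimalPeriod (Nat.one_le_iff_ne_zero.1 hl)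
      (hlt.trans_eq period_eq.symm)
end
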